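/- Let k ∈ ℕ and set l := 4k − 3. Let P be a polynomial with real coefficients of degree < l and let μ be a finite positive Borel measure on [−1, 1]. Let A, B be bounded self-adjoint operators on H with the spectrum of A contained in (−1, 1) and B positive semidefinite, and set X := A + iB. Then for every λ ∈ [−1, 1] the operators I − λX and I − λ(A + tB) (for real t near 0) are invertible, the Bochner integrals defining f(Y) := P(Y) + ∫_{[−1,1]} Y^{l} (I − λY)^{-1} dμ(λ) exist for Y = X and Y = A + tB, and Im f(X) ≥ Σ_{m=1}^{2k−2} ((−1)^{m−1} / (2m−1)!) · D^{2m−1}f(A;B) (the right-hand side being 0 when k = 1), where D^{m}f(A;B) denotes the m-th derivative at t = 0 of the map t ↦ f(A + tB). -/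

import Mathlib

open ContinuousLinearMap MeasureTheory

variable {H : Type*} [NormedAddCommGroup H] [InnerProductSpace ℂ H] [CompleteSpace H]

/-- The imaginary part `(Y - Y*)/(2i)` of a bounded operator. -/
noncomputable def opIm (Y : H →L[ℂ] H) : H →L[ℂ] H := (2 * Complex.I)⁻¹ • (Y - star Y)

/-- The operator function `Y ↦ P(Y) + ∫_{[−1,1]} Y^l (I − λY)⁻¹ dμ(λ)`, the integral
representation of an operator `l`-tone function on `(−1,1)`. -/
noncomputable def fcal (P : Polynomial ℝ) (μ : Measure ℝ) (l : ℕ) (Y : H →L[ℂ] H) :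
    H →L[ℂ] H :=
  Polynomial.aeval Y (P.map Complex.ofRealHom) +
    ∫ s, Y ^ l * Ring.inverse (1 - (s : ℂ) • Y) ∂μ

theorem aux_alg {R : Type*} [Ring R] [Algebra ℂ R] (a b r S : R) (hS : ∀ x, S * x = x * S)
    (h1 : r * (1 - S * a) = 1) (h2 : (1 - S * a) * r = 1) (l : ℕ) :
    ∃ q : ℕ → R, ∀ (z : ℂ) (w : R), w * (1 - S * (a + z • b)) = 1 →
      (1 - S * (a + z • b)) * w = 1 →
      (a + z • b) ^ l * w = ∑ n ∈ Finset.range l, z ^ n • q n + z ^ l • ((r * b) ^ l * w) := by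
  induction l with
  | zero => exact ⟨0, by simp⟩
  | succ l ih =>
    obtain ⟨q, hq⟩ := ih
    refine ⟨fun n => (if n < l then q n * a else 0) + (if n = 0 then 0 else q (n-1) * b)
      + (if n = l then (r * b) ^ l * (a * r) else 0), fun z w hw1 hw2 => ?_⟩
    set Y := a + z • b with hY
    have hc : w * Y = Y * w := by
      have : (1 - S * Y) * Y = Y * (1 - S * Y) := by
        rw [sub_mul, mul_sub, hS, mul_one, one_mul, mul_assoc, hS]
      calc w * Y = w * Y * ((1 - S * Y) * w) := by rw [hw2, mul_one]
        _ = w * (Y * (1 - S * Y)) * w := by simp only [mul_assoc]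
        _ = w * (1 - S * Y) * Y * w := by rw [← this]; simp only [mul_assoc]
        _ = Y * w := by rw [hw1, one_mul]
    have har : r * a = a * r := by
      have : (1 - S * a) * a = a * (1 - S * a) := by
        rw [sub_mul, mul_sub, hS, mul_one, one_mul, mul_assoc, hS]
      calc r * a = r * a * ((1 - S * a) * r) := by rw [h2, mul_one]
        _ = r * (a * (1 - S * a)) * r := by simp only [mul_assoc]
        _ = r * (1 - S * a) * a * r := by rw [← this]; simp only [mul_assoc]
        _ = a * r := by rw [h1, one_mul]
    have key : Y * w = a * r + z • (r * b * w) := by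
      have e : (1 - S * a) * Y = a * (1 - S * Y) + z • b := by
        rw [sub_mul, mul_sub, one_mul, mul_one, hS a, mul_assoc, hY]; abel
      calc Y * w = r * (1 - S * a) * Y * w := by rw [h1, one_mul]
        _ = r * ((1 - S * a) * Y) * w := by simp only [mul_assoc]
        _ = r * a * ((1 - S * Y) * w) + z • (r * b * w) := by
          rw [e]; simp only [mul_add, add_mul, mul_assoc, mul_smul_comm, smul_mul_assoc]
        _ = _ := by rw [hw2, mul_one, har]
    have hs : ∑ n ∈ Finset.range (l+1), z ^ n • ((if n < l then q n * a else 0) + (if n = 0 then 0 else q (n-1) * b)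
      + (if n = l then (r * b) ^ l * (a * r) else 0)) = (∑ n ∈ Finset.range l, z ^ n • q n) * Y + z ^ l • ((r * b) ^ l * (a * r)) := by
      simp only [smul_add, Finset.sum_add_distrib]
      rw [Finset.sum_range_succ, Finset.sum_range_succ', hY, mul_add]
      congr 1
      · congr 1
        · simp only [lt_irrefl, if_false, smul_zero, add_zero, Finset.sum_mul]
          refine Finset.sum_congr rfl fun n hn => ?_
          rw [if_pos (Finset.mem_range.1 hn), smul_mul_assoc]
        · simp [Finset.sum_mul, Finset.smul_sum, pow_succ', smul_smul]
      · simp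
    rw [hs, pow_succ, mul_assoc, ← hc, ← mul_assoc, hq z w hw1 hw2, add_mul, add_assoc]
    congr 1
    rw [smul_mul_assoc, mul_assoc, hc, key, mul_add, smul_add, mul_smul_comm, smul_smul, ← pow_succ]
    congr 2
    rw [pow_succ, mul_assoc, mul_assoc, mul_assoc]

theorem aux_pow {R : Type*} [Ring R] [Algebra ℂ R] (a b : R) (l : ℕ) :
    ∃ q : ℕ → R, ∀ (z : ℂ), (a + z • b) ^ l = ∑ n ∈ Finset.range (l+1), z ^ n • q n := by
  obtain ⟨q, hq⟩ := aux_alg a b 1 0 (by simp) (by simp) (by simp) l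
  refine ⟨fun n => if n < l then q n else b ^ l, fun z => ?_⟩
  have := hq z 1 (by simp) (by simp)
  simp only [mul_one, one_mul] at this
  rw [this, Finset.sum_range_succ]
  simp only [lt_irrefl, if_false]
  congr 1
  exact Finset.sum_congr rfl fun n hn => by rw [if_pos (Finset.mem_range.1 hn)]

theorem aux_poly {R : Type*} [Ring R] [Algebra ℂ R] (a b : R) (l : ℕ) (P : Polynomial ℂ)
    (hl : 0 < l) (hP : P.degree < l) :
    ∃ q : ℕ → R, ∀ (z : ℂ), Polynomial.aeval (a + z • b) P = ∑ n ∈ Finset.range l, z ^ n • q n := by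
  choose q hq using fun l => aux_pow a b l
  refine ⟨fun n => ∑ j ∈ Finset.range l, if n < j + 1 then P.coeff j • q j n else 0, fun z => ?_⟩
  rw [Polynomial.aeval_eq_sum_range' (n := l)]
  · simp only [Finset.smul_sum]
    rw [Finset.sum_comm]
    refine Finset.sum_congr rfl fun j hj => ?_
    rw [hq, Finset.smul_sum]
    have : Finset.range (j+1) ⊆ Finset.range l := by
      intro x; simp at *; omega
    rw [← Finset.sum_subset this]
    · refine Finset.sum_congr rfl fun n hn => ?_
      rw [if_pos (Finset.mem_range.1 hn), smul_comm]
    · intro x _ hx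
      rw [if_neg (by simpa using hx), smul_zero]
  · by_cases h : P = 0
    · subst h
      simpa using hl
    · exact (Polynomial.natDegree_lt_iff_degree_lt h).2 hP

theorem aux_deriv_pow {E : Type*} [NormedAddCommGroup E] [NormedSpace ℝ E] (f : ℝ → E)
    (j n : ℕ) (hn : n ≤ j) (hf : ContDiffAt ℝ n f 0) :
    iteratedDeriv n (fun t : ℝ => t ^ j • f t) 0 = if n = j then (n.factorial : ℝ) • f 0 else 0 := by
  have := iteratedDerivWithin_smul (𝔸 := ℝ) (f := fun t : ℝ => t ^ j) (g := f) (n := n) (x := 0) (s := Set.univ)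
    (Set.mem_univ _) uniqueDiffOn_univ (by fun_prop) (contDiffWithinAt_univ.2 hf)
  simp only [iteratedDerivWithin_univ] at this
  have e : (fun t : ℝ => t ^ j • f t) = (fun t : ℝ => t ^ j) • f := rfl
  rw [e, this]
  simp only [iteratedDeriv_fun_pow_zero]
  rw [Finset.sum_eq_single n]
  · simp; split_ifs <;> simp_all
  · intro b hb hbn
    have : b < n + 1 := Finset.mem_range.1 hb
    rw [if_neg (by omega)]; simp
  · simp

theorem aux_deriv {E : Type*} [NormedAddCommGroup E] [NormedSpace ℝ E] (F G : ℝ → E)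
    (l n : ℕ) (hn : n < l) (q : ℕ → E) (hG : ContDiffAt ℝ n G 0)
    (hF : ∀ᶠ t in nhds (0:ℝ), F t = ∑ n ∈ Finset.range l, t ^ n • q n + t ^ l • G t) :
    iteratedDeriv n F 0 = (n.factorial : ℝ) • q n := by
  have hF' : F =ᶠ[nhds 0] fun t => (∑ n ∈ Finset.range l, t ^ n • q n) + t ^ l • G t := hF
  rw [hF'.iteratedDeriv_eq, iteratedDeriv_fun_add (by fun_prop) (by fun_prop),
    iteratedDeriv_fun_sum (fun i _ => by fun_prop), aux_deriv_pow G l n hn.le hG, if_neg hn.ne, add_zero]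
  rw [Finset.sum_eq_single n]
  · rw [aux_deriv_pow (fun _ => q n) n n le_rfl contDiffAt_const, if_pos rfl]
  · intro b hb hbn
    rcases lt_or_gt_of_ne hbn with h | h
    · have : iteratedDeriv n (fun t : ℝ => t ^ b • q b) 0 = 0 := by
        rw [iteratedDeriv_smul_const (by fun_prop), iteratedDeriv_fun_pow_zero, if_neg h.ne', Nat.cast_zero, zero_smul]
      exact this
    · rw [aux_deriv_pow (fun _ => q b) b n h.le contDiffAt_const, if_neg h.ne]
  · intro h; exact absurd (Finset.mem_range.2 hn) h

theorem aux_norm [Nontrivial H] (A : H →L[ℂ] H) (hA : IsSelfAdjoint A)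
    (hspA : spectrum ℂ A ⊆ (fun x : ℝ => (x : ℂ)) '' Set.Ioo (-1 : ℝ) 1) : ‖A‖ < 1 := by
  obtain ⟨z, hz, hz2⟩ := spectrum.exists_nnnorm_eq_spectralRadius A
  rw [hA.spectralRadius_eq_nnnorm] at hz2
  obtain ⟨x, hx, rfl⟩ := hspA hz
  have h : ‖(x:ℂ)‖₊ = ‖A‖₊ := ENNReal.coe_injective hz2
  have h2 : ‖(x:ℂ)‖ = ‖A‖ := congrArg NNReal.toReal h
  rw [← h2, Complex.norm_real, Real.norm_eq_abs, abs_lt]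
  exact hx

theorem aux_unit (A B : H →L[ℂ] H) (hA : ‖A‖ < 1) (hB : IsSelfAdjoint B)
    (s : ℝ) (hs : s ∈ Set.Icc (-1:ℝ) 1) : IsUnit (1 - (s : ℂ) • (A + Complex.I • B)) := by
  refine isUnit_of_forall_le_norm_inner_map _ (c := Real.toNNReal (1 - ‖A‖)) (by
    simpa using hA) fun x => ?_
  refine le_trans ?_ (Complex.re_le_norm _)
  have h1 : (inner ℂ (B x) x).im = 0 := by
    have := (ContinuousLinearMap.isSelfAdjoint_iff_isSymmetric.1 hB).im_inner_apply_self x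
    simpa using this
  have h2 : ‖inner ℂ (A x) x‖ ≤ ‖A‖ * ‖x‖ ^ 2 := by
    refine (norm_inner_le_norm _ _).trans ?_
    nlinarith [A.le_opNorm x, norm_nonneg x]
  have h3 : |(inner ℂ (A x) x).re| ≤ ‖A‖ * ‖x‖ ^ 2 := (Complex.abs_re_le_norm _).trans h2
  have h4 : |s * (inner ℂ (A x) x).re| ≤ ‖A‖ * ‖x‖ ^ 2 := by
    rw [abs_mul]
    have : |s| ≤ 1 := abs_le.2 hs
    nlinarith [abs_nonneg (inner ℂ (A x) x).re]
  have h5 : (inner ℂ x x).re = ‖x‖ ^ 2 := by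
    rw [inner_self_eq_norm_sq_to_K]; norm_cast
  simp only [_root_.sub_apply, _root_.smul_apply, _root_.add_apply,
    one_apply_eq_self, inner_sub_left, inner_smul_left, inner_add_left, Real.coe_toNNReal _ (sub_nonneg.2 hA.le)]
  rw [Complex.sub_re, h5]
  simp [h1]
  nlinarith [le_abs_self (s * (inner ℂ (A x) x).re)]

theorem aux_unit' (A B : H →L[ℂ] H) (t : ℝ) (ht : |t| < (1 - ‖A‖) / (‖B‖ + 1))
    (s : ℝ) (hs : s ∈ Set.Icc (-1:ℝ) 1) : IsUnit (1 - (s : ℂ) • (A + t • B)) := by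
  apply isUnit_one_sub_of_norm_lt_one
  rw [norm_smul, Complex.norm_real, Real.norm_eq_abs]
  have : |s| ≤ 1 := abs_le.2 hs
  rw [lt_div_iff₀ (by positivity)] at ht
  have h2 : ‖A + t • B‖ ≤ ‖A‖ + |t| * ‖B‖ := (norm_add_le _ _).trans (by rw [norm_smul]; rfl)
  nlinarith [abs_nonneg t, norm_nonneg (A + t • B), norm_nonneg B]

/-- `Re ((R B)^(2m+1) W) ≥ 0`. -/
theorem aux_pos (A B R W : H →L[ℂ] H) (hA : IsSelfAdjoint A) (hB : B.IsPositive) (s : ℝ) (m : ℕ)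
    (hR1 : R * (1 - (s:ℂ) • A) = 1) (hR2 : (1 - (s:ℂ) • A) * R = 1)
    (hW1 : W * (1 - (s:ℂ) • (A + Complex.I • B)) = 1)
    (hW2 : (1 - (s:ℂ) • (A + Complex.I • B)) * W = 1) (x : H) :
    0 ≤ (inner ℂ (((R * B) ^ (2 * m + 1) * W) x) x).re := by
  have hBs : IsSelfAdjoint B := hB.isSelfAdjoint
  set V := 1 - (s:ℂ) • (A + Complex.I • B) with hV
  set D := 1 - (s:ℂ) • A with hD
  have hDs : star D = D := by simp [hD, hA.star_eq]
  have hRs : star R = R := by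
    have h : star R * D = 1 := by
      rw [← hDs, ← star_mul, hR2, star_one]
    calc star R = star R * (D * R) := by rw [hR2, mul_one]
      _ = R := by rw [← mul_assoc, h, one_mul]
  have hVD : V = D - ((s:ℂ) * Complex.I) • B := by
    rw [hV, hD, smul_add, smul_smul]; abel
  have hcomm : R * B * W = W * (B * R) := by
    have e : V * (R * B) = (B * R) * V := by
      rw [hVD]
      simp only [sub_mul, mul_sub, smul_mul_assoc, mul_smul_comm]
      rw [← mul_assoc, hR2, mul_assoc B R D, hR1, one_mul, mul_one, mul_assoc]
    calc R * B * W = W * V * (R * B) * W := by rw [hW1, one_mul]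
      _ = W * (V * (R * B)) * W := by simp only [mul_assoc]
      _ = W * (B * R) * (V * W) := by rw [e]; simp only [mul_assoc]
      _ = _ := by rw [hW2, mul_one]
  have hpow : ∀ m : ℕ, (R * B) ^ m * W = W * (B * R) ^ m := by
    intro m
    induction m with
    | zero => simp
    | succ m ih => rw [pow_succ, mul_assoc, hcomm, ← mul_assoc, ih, mul_assoc, ← pow_succ]
  have hst : star ((R * B) ^ m) = (B * R) ^ m := by
    rw [star_pow, star_mul, hBs.star_eq, hRs]
  have hfac : (R * B) ^ (2 * m + 1) * W = (R * B) ^ m * (R * B * W) * (B * R) ^ m := by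
    rw [two_mul, add_assoc, pow_add, pow_succ', mul_assoc, mul_assoc, hpow]
    simp only [mul_assoc]
  rw [hfac]
  set y := ((B * R) ^ m) x with hy
  have e1 : inner ℂ (((R * B) ^ m * (R * B * W) * (B * R) ^ m) x) x = inner ℂ ((R * B * W) y) y := by
    rw [hy, ← hst, ContinuousLinearMap.star_eq_adjoint, ContinuousLinearMap.adjoint_inner_right]
    rfl
  rw [e1]
  set u := W y with hu
  have hyu : y = V u := by
    rw [hu, ← mul_apply_eq_comp, hW2]; rfl
  have e2 : inner ℂ ((R * B * W) y) y = inner ℂ (B u) (R (V u)) := by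
    rw [← hyu]
    conv_rhs => rw [← hRs, ContinuousLinearMap.star_eq_adjoint, ContinuousLinearMap.adjoint_inner_right]
    rfl
  have e3 : R (V u) = u - ((s:ℂ) * Complex.I) • R (B u) := by
    rw [hVD, _root_.sub_apply, map_sub, _root_.smul_apply, map_smul,
      ← mul_apply_eq_comp R D, hR1]; rfl
  have h1 : (inner ℂ (B u) (R (B u))).im = 0 := by
    have := (ContinuousLinearMap.isSelfAdjoint_iff_isSymmetric.1 (show IsSelfAdjoint R from hRs)).im_inner_self_apply (B u)
    simpa using this
  have h2 : 0 ≤ (inner ℂ (B u) u).re := hB.re_inner_nonneg_left u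
  rw [e2, e3, inner_sub_right, inner_smul_right]
  simp [h1, h2]

noncomputable def LL (μ : Measure ℝ) [IsFiniteMeasure μ] :
    C(Set.Icc (-1:ℝ) 1, H →L[ℂ] H) →L[ℂ] (H →L[ℂ] H) :=
  LinearMap.mkContinuous
    { toFun := fun f => ∫ x, f x ∂(μ.comap (Subtype.val : Set.Icc (-1:ℝ) 1 → ℝ))
      map_add' := fun f g => by
        have hi : ∀ f : C(Set.Icc (-1:ℝ) 1, H →L[ℂ] H), Integrable f (μ.comap (Subtype.val : Set.Icc (-1:ℝ) 1 → ℝ)) :=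
          fun f => f.continuous.integrable_of_hasCompactSupport (HasCompactSupport.of_compactSpace _)
        exact integral_add (hi f) (hi g)
      map_smul' := fun c f => integral_smul c _ }
    ((μ.comap (Subtype.val : Set.Icc (-1:ℝ) 1 → ℝ)).real Set.univ) (fun f => by
      rw [mul_comm]
      exact norm_integral_le_of_norm_le_const (Filter.Eventually.of_forall fun x => f.norm_coe_le_norm x))

theorem LL_apply (μ : Measure ℝ) [IsFiniteMeasure μ] (f : C(Set.Icc (-1:ℝ) 1, H →L[ℂ] H)) :
   LL μ f = ∫ x, f x ∂(μ.comap (Subtype.val : Set.Icc (-1:ℝ) 1 → ℝ)) := rfl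

theorem LL_apply' (μ : Measure ℝ) [IsFiniteMeasure μ] (hμ : μ (Set.Icc (-1 : ℝ) 1)ᶜ = 0)
    (f : C(Set.Icc (-1:ℝ) 1, H →L[ℂ] H)) (g : ℝ → (H →L[ℂ] H)) (hg : ∀ x : Set.Icc (-1:ℝ) 1, f x = g x) :
   ∫ x, g x ∂μ = LL μ f := by
  rw [LL_apply]
  simp_rw [hg]
  rw [integral_subtype_comap measurableSet_Icc g, Measure.restrict_eq_self_of_ae_mem]
  exact hμ

theorem aux_integrable (μ : Measure ℝ) [IsFiniteMeasure μ] (hμ : μ (Set.Icc (-1 : ℝ) 1)ᶜ = 0)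
    (Y : H →L[ℂ] H) (l : ℕ) (h : ∀ s ∈ Set.Icc (-1 : ℝ) 1, IsUnit (1 - (s : ℂ) • Y)) :
    Integrable (fun s : ℝ => Y ^ l * Ring.inverse (1 - (s : ℂ) • Y)) μ := by
  have hc : ContinuousOn (fun s : ℝ => Y ^ l * Ring.inverse (1 - (s : ℂ) • Y)) (Set.Icc (-1) 1) := by
    refine continuousOn_const.mul ?_
    intro s hs
    obtain ⟨u, hu⟩ := h s hs
    have h1 := NormedRing.inverse_continuousAt u
    rw [hu] at h1
    exact (ContinuousAt.comp (f := fun s : ℝ => 1 - (s : ℂ) • Y) h1 (by fun_prop)).continuousWithinAt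
  have := hc.integrableOn_compact (μ := μ) isCompact_Icc
  rwa [IntegrableOn, Measure.restrict_eq_self_of_ae_mem] at this
  exact hμ

theorem LL_bound (μ : Measure ℝ) [IsFiniteMeasure μ] (f : C(Set.Icc (-1:ℝ) 1, H →L[ℂ] H)) :
   ‖LL μ f‖ ≤ ((μ.comap (Subtype.val : Set.Icc (-1:ℝ) 1 → ℝ)).real Set.univ) * ‖f‖ := by
  rw [mul_comm]
  exact norm_integral_le_of_norm_le_const (Filter.Eventually.of_forall fun x => f.norm_coe_le_norm x)

noncomputable def SS : C(Set.Icc (-1:ℝ) 1, H →L[ℂ] H) :=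
  ⟨fun s => ((s : ℝ) : ℂ) • 1, by fun_prop⟩

theorem SS_comm (f : C(Set.Icc (-1:ℝ) 1, H →L[ℂ] H)) : SS * f = f * SS := by
  ext1 s
  simp [SS]

theorem SS_const (Y : H →L[ℂ] H) (s : Set.Icc (-1:ℝ) 1) :
    (1 - SS * ContinuousMap.const _ Y : C(Set.Icc (-1:ℝ) 1, H →L[ℂ] H)) s = 1 - ((s:ℝ):ℂ) • Y := by
  simp [SS]

theorem SS_unit (Y : H →L[ℂ] H) (h : ∀ s ∈ Set.Icc (-1 : ℝ) 1, IsUnit (1 - (s : ℂ) • Y)) :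
    IsUnit (1 - SS * ContinuousMap.const _ Y : C(Set.Icc (-1:ℝ) 1, H →L[ℂ] H)) := by
  rw [ContinuousMap.isUnit_iff_forall_isUnit]
  intro s
  rw [SS_const]
  exact h s s.2

theorem SS_inv (Y : H →L[ℂ] H) (h : ∀ s ∈ Set.Icc (-1 : ℝ) 1, IsUnit (1 - (s : ℂ) • Y))
    (s : Set.Icc (-1:ℝ) 1) :
    Ring.inverse (1 - SS * ContinuousMap.const _ Y : C(Set.Icc (-1:ℝ) 1, H →L[ℂ] H)) s
      = Ring.inverse (1 - ((s:ℝ):ℂ) • Y) := by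
  have h1 := Ring.inverse_mul_cancel _ (SS_unit Y h)
  have h2 := congrArg (fun f : C(Set.Icc (-1:ℝ) 1, H →L[ℂ] H) => f s) h1
  simp only [ContinuousMap.mul_apply, SS_const, ContinuousMap.one_apply] at h2
  calc _ = Ring.inverse (1 - SS * ContinuousMap.const _ Y : C(Set.Icc (-1:ℝ) 1, H →L[ℂ] H)) s *
      ((1 - ((s:ℝ):ℂ) • Y) * Ring.inverse (1 - ((s:ℝ):ℂ) • Y)) := by
        rw [Ring.mul_inverse_cancel _ (h s s.2), mul_one]
    _ = _ := by rw [← mul_assoc, h2, one_mul]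

theorem fcal_eq (P : Polynomial ℝ) (μ : Measure ℝ) [IsFiniteMeasure μ]
    (hμ : μ (Set.Icc (-1 : ℝ) 1)ᶜ = 0) (l : ℕ) (Y : H →L[ℂ] H)
    (h : ∀ s ∈ Set.Icc (-1 : ℝ) 1, IsUnit (1 - (s : ℂ) • Y)) :
    fcal P μ l Y = Polynomial.aeval Y (P.map Complex.ofRealHom) +
      LL μ ((ContinuousMap.const _ Y) ^ l * Ring.inverse (1 - SS * ContinuousMap.const _ Y)) := by
  rw [fcal]
  congr 1
  apply LL_apply' μ hμ
  intro s
  rw [ContinuousMap.mul_apply, SS_inv Y h]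
  simp

/-- Main decomposition. -/
theorem aux_decomp (P : Polynomial ℝ) (μ : Measure ℝ) [IsFiniteMeasure μ]
    (hμ : μ (Set.Icc (-1 : ℝ) 1)ᶜ = 0) (l : ℕ) (hl : 0 < l) (hP : P.degree < l)
    (A B : H →L[ℂ] H) (hA : ∀ s ∈ Set.Icc (-1 : ℝ) 1, IsUnit (1 - (s : ℂ) • A)) :
    ∃ q : ℕ → (H →L[ℂ] H), ∀ z : ℂ, (∀ s ∈ Set.Icc (-1 : ℝ) 1, IsUnit (1 - (s : ℂ) • (A + z • B))) →
      fcal P μ l (A + z • B) = ∑ n ∈ Finset.range l, z ^ n • q n +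
        z ^ l • LL μ ((Ring.inverse (1 - SS * ContinuousMap.const _ A) * ContinuousMap.const _ B) ^ l *
          Ring.inverse (1 - SS * ContinuousMap.const _ (A + z • B))) := by
  obtain ⟨q1, hq1⟩ := aux_poly A B l (P.map Complex.ofRealHom) hl
    (by rwa [Polynomial.degree_map])
  obtain ⟨q2, hq2⟩ := aux_alg (ContinuousMap.const (Set.Icc (-1:ℝ) 1) A) (ContinuousMap.const _ B)
    (Ring.inverse (1 - SS * ContinuousMap.const _ A)) SS SS_comm
    (Ring.inverse_mul_cancel _ (SS_unit A hA)) (Ring.mul_inverse_cancel _ (SS_unit A hA)) l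
  refine ⟨fun n => q1 n + LL μ (q2 n), fun z hz => ?_⟩
  have hc : ContinuousMap.const (Set.Icc (-1:ℝ) 1) (A + z • B) =
    ContinuousMap.const _ A + z • ContinuousMap.const _ B := rfl
  have hu := SS_unit _ hz
  rw [fcal_eq P μ hμ l _ hz, hq1]
  have := hq2 z (Ring.inverse (1 - SS * ContinuousMap.const _ (A + z • B)))
    (by rw [← hc]; exact Ring.inverse_mul_cancel _ hu)
    (by rw [← hc]; exact Ring.mul_inverse_cancel _ hu)
  rw [← hc] at this
  rw [this, map_add, map_sum, map_smul]
  simp only [map_smul, smul_add, Finset.sum_add_distrib, add_assoc]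

theorem aux_smooth0 {R E : Type*} [NormedRing R] [NormedAlgebra ℂ R] [CompleteSpace R]
    [NormedAddCommGroup E] [NormedSpace ℂ E] (Λ : R → E) (hΛ : IsBoundedLinearMap ℂ Λ)
    (c a b S : R) (h : IsUnit (1 - S * a)) (n : ℕ) :
    ContDiffAt ℝ n (fun t : ℝ => Λ (c * Ring.inverse (1 - S * (a + (t:ℂ) • b)))) 0 := by
  have h0 : ContDiffAt ℂ n (fun z : ℂ => 1 - S * (a + z • b)) 0 := by fun_prop
  have h1 : ContDiffAt ℂ n (fun z : ℂ => Ring.inverse (1 - S * (a + z • b))) 0 := by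
    obtain ⟨u, hu⟩ := h
    have h1 := contDiffAt_ringInverse ℂ (n := n) u
    refine ContDiffAt.comp (g := Ring.inverse) (f := fun z : ℂ => 1 - S * (a + z • b)) 0 ?_ h0
    simp only [zero_smul, add_zero]
    rw [← hu]; exact h1
  have h2 : ContDiffAt ℂ n (fun z : ℂ => Λ (c * Ring.inverse (1 - S * (a + z • b)))) 0 :=
    ContDiffAt.comp (g := Λ) (f := fun z : ℂ => c * Ring.inverse (1 - S * (a + z • b))) 0
      hΛ.contDiff.contDiffAt (contDiffAt_const.mul h1)
  have h3 : ContDiffAt ℝ n (fun t : ℝ => (t : ℂ)) 0 := Complex.ofRealCLM.contDiff.contDiffAt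
  exact ContDiffAt.comp (g := fun z : ℂ => Λ (c * Ring.inverse (1 - S * (a + z • b))))
    (f := fun t : ℝ => (t : ℂ)) (0:ℝ) (by simpa using h2.restrict_scalars ℝ) h3

theorem LL_bdd (μ : Measure ℝ) [IsFiniteMeasure μ] :
    IsBoundedLinearMap ℂ (fun f : C(Set.Icc (-1:ℝ) 1, H →L[ℂ] H) => LL μ f) :=
  IsLinearMap.with_bound ⟨fun f g => map_add (LL μ) f g, fun c f => map_smul (LL μ) c f⟩ _
        (LL_bound μ)

theorem aux_smooth (μ : Measure ℝ) [IsFiniteMeasure μ] (c : C(Set.Icc (-1:ℝ) 1, H →L[ℂ] H))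
    (A B : H →L[ℂ] H) (hA : ∀ s ∈ Set.Icc (-1 : ℝ) 1, IsUnit (1 - (s : ℂ) • A)) (n : ℕ) :
    ContDiffAt ℝ n (fun t : ℝ => LL μ (c *
          Ring.inverse (1 - SS * ContinuousMap.const _ (A + (t:ℂ) • B)))) 0 :=
  aux_smooth0 (fun f : C(Set.Icc (-1:ℝ) 1, H →L[ℂ] H) => LL μ f) (LL_bdd μ) c
    (ContinuousMap.const _ A) (ContinuousMap.const _ B) SS (SS_unit A hA) n

theorem fcal_star (P : Polynomial ℝ) (μ : Measure ℝ) (l : ℕ) (Y : H →L[ℂ] H) (hY : IsSelfAdjoint Y) :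
    star (fcal P μ l Y) = fcal P μ l Y := by
  rw [fcal, star_add]
  congr 1
  · rw [Polynomial.aeval_eq_sum_range, star_sum]
    refine Finset.sum_congr rfl fun i _ => ?_
    rw [star_smul, star_pow, hY.star_eq]
    simp
  · have := ((starL' ℝ : (H →L[ℂ] H) ≃L[ℝ] (H →L[ℂ] H))).integral_comp_comm (μ := μ)
      (fun s : ℝ => Y ^ l * Ring.inverse (1 - (s : ℂ) • Y))
    have e : star (∫ s : ℝ, Y ^ l * Ring.inverse (1 - (s : ℂ) • Y) ∂μ) =
      ∫ s : ℝ, star (Y ^ l * Ring.inverse (1 - (s : ℂ) • Y)) ∂μ := this.symm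
    rw [e]
    refine integral_congr_ae (Filter.Eventually.of_forall fun s => ?_)
    have h1 : star (1 - (s : ℂ) • Y) = 1 - (s : ℂ) • Y := by simp [hY.star_eq]
    have h2 : Commute (Ring.inverse (1 - (s : ℂ) • Y)) (Y ^ l) := by
      have h3 : Commute (1 - (s : ℂ) • Y) (Y ^ l) := ((Commute.one_left Y).sub_left ((Commute.refl Y).smul_left _)).pow_right l
      by_cases hun : IsUnit (1 - (s : ℂ) • Y)
      · obtain ⟨u, hu⟩ := hun
        rw [← hu] at h3 ⊢
        rw [Ring.inverse_unit]
        exact h3.units_inv_left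
      · rw [Ring.inverse_non_unit _ hun]
        exact Commute.zero_left _
    simp only
    rw [star_mul, star_pow, hY.star_eq, ← Ring.inverse_star, h1, h2.eq]

theorem opIm_add (Y Z : H →L[ℂ] H) : opIm (Y + Z) = opIm Y + opIm Z := by
  simp only [opIm, star_add, ← smul_add]; congr 1; abel

theorem opIm_smul (c : ℂ) (Y : H →L[ℂ] H) (hY : star Y = Y) : opIm (c • Y) = c.im • Y := by
  have : opIm (c • Y) = ((2 * Complex.I)⁻¹ * (c - star c)) • Y := by
    rw [opIm, star_smul, hY, ← sub_smul, smul_smul]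
  rw [this]
  have h : (2 * Complex.I)⁻¹ * (c - star c) = (c.im : ℂ) := by
    have : c - star c = (2 * Complex.I) * (c.im : ℂ) := by
      apply Complex.ext <;> simp; ring
    rw [this, inv_mul_cancel_left₀ (by simp)]
  rw [h, Complex.coe_smul]

theorem opIm_sum (q : ℕ → (H →L[ℂ] H)) (M : ℕ) (hq : ∀ n < 2 * M + 1, star (q n) = q n) :
    opIm (∑ n ∈ Finset.range (2 * M + 1), Complex.I ^ n • q n) =
      ∑ m ∈ Finset.Icc 1 M, ((-1:ℝ) ^ (m - 1)) • q (2 * m - 1) := by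
  induction M with
  | zero =>
    have := opIm_smul 1 (q 0) (hq 0 (by simp))
    simpa using this
  | succ M ih =>
    rw [Finset.sum_Icc_succ_top (by omega), ← ih (fun n hn => hq n (by omega)),
      show 2 * (M + 1) + 1 = 2 * M + 1 + 1 + 1 by ring, Finset.sum_range_succ, Finset.sum_range_succ,
      opIm_add, opIm_add, opIm_smul _ _ (hq _ (by omega)), opIm_smul _ _ (hq _ (by omega)), add_assoc]
    congr 1
    have h1 : (Complex.I ^ (2 * M + 1)).im = (-1) ^ M := by
      rw [pow_succ, pow_mul, Complex.I_sq]
      have : ((-1:ℂ)) ^ M = (((-1:ℝ) ^ M : ℝ) : ℂ) := by push_cast; rfl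
      rw [this, Complex.im_ofReal_mul, Complex.I_im, mul_one]
    have h2 : (Complex.I ^ (2 * M + 1 + 1)).im = 0 := by
      rw [show 2 * M + 1 + 1 = 2 * (M + 1) by ring, pow_mul, Complex.I_sq]
      have : ((-1:ℂ)) ^ (M+1) = (((-1:ℝ) ^ (M+1) : ℝ) : ℂ) := by push_cast; rfl
      rw [this]; exact Complex.ofReal_im _
    rw [h1, h2, zero_smul, add_zero]
    congr 2

theorem opIm_pos (T : H →L[ℂ] H) (hT : ∀ x, 0 ≤ (inner ℂ (T x) x).re) :
    (opIm (Complex.I • T)).IsPositive := by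
  have h : opIm (Complex.I • T) = (2:ℝ)⁻¹ • (T + star T) := by
    rw [opIm, star_smul, ← Complex.coe_smul]
    have : star Complex.I = - Complex.I := Complex.conj_I
    rw [this, neg_smul, sub_neg_eq_add, ← smul_add, smul_smul]
    congr 1
    push_cast
    rw [mul_inv, mul_assoc, inv_mul_cancel₀ Complex.I_ne_zero, mul_one]
  rw [h, ContinuousLinearMap.isPositive_def']
  refine ⟨?_, fun x => ?_⟩
  · rw [IsSelfAdjoint, star_smul, star_add, star_star, add_comm, star_trivial]
  · have h1 : (inner ℂ ((star T) x) x).re = (inner ℂ (T x) x).re := by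
      rw [ContinuousLinearMap.star_eq_adjoint, ContinuousLinearMap.adjoint_inner_left,
        ← inner_conj_symm, Complex.conj_re]
    have h2 : ((2:ℝ)⁻¹ • (T + star T)).reApplyInnerSelf x = (inner ℂ (T x) x).re := by
      rw [ContinuousLinearMap.reApplyInnerSelf_apply, ← Complex.coe_smul, _root_.smul_apply,
        inner_smul_left, _root_.add_apply, inner_add_left]
      have : (starRingEnd ℂ) (((2:ℝ)⁻¹ : ℝ) : ℂ) = (((2:ℝ)⁻¹ : ℝ) : ℂ) := Complex.conj_ofReal _
      rw [this]
      change (_ : ℂ).re = _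
      rw [Complex.re_ofReal_mul, Complex.add_re, h1]
      ring
    rw [h2]
    exact hT x

theorem LL_pos (μ : Measure ℝ) [IsFiniteMeasure μ] (f : C(Set.Icc (-1:ℝ) 1, H →L[ℂ] H))
    (hf : ∀ s x, 0 ≤ (inner ℂ (f s x) x).re) (x : H) : 0 ≤ (inner ℂ (LL μ f x) x).re := by
  have hi : Integrable f (μ.comap (Subtype.val : Set.Icc (-1:ℝ) 1 → ℝ)) :=
    f.continuous.integrable_of_hasCompactSupport (HasCompactSupport.of_compactSpace _)
  let φ : (H →L[ℂ] H) →L[ℂ] ℂ := (innerSL ℂ x).comp (ContinuousLinearMap.apply ℂ H x)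
  have h1 : (inner ℂ (LL μ f x) x).re = (Complex.reCLM.comp (φ.restrictScalars ℝ)) (LL μ f) := by
    rw [← inner_conj_symm, Complex.conj_re]; rfl
  rw [h1, LL_apply, ← ContinuousLinearMap.integral_comp_comm _ hi]
  refine integral_nonneg fun s => ?_
  have h2 : (Complex.reCLM.comp (φ.restrictScalars ℝ)) (f s) = (inner ℂ (f s x) x).re := by
    rw [← inner_conj_symm, Complex.conj_re]; rfl
  change (0:ℝ) ≤ (Complex.reCLM.comp (φ.restrictScalars ℝ)) (f s)
  rw [h2]
  exact hf s x

/-- The `(4k−3)`-tone case of the main theorem: for `f(Y) = P(Y) + ∫ Y^{4k−3}(I−λY)⁻¹ dμ(λ)`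
with `deg P < 4k−3` and `μ` a finite positive measure on `[−1,1]`, all the relevant operators
are invertible, the Bochner integrals exist, and, for `X = A + iB` with `B ≥ 0`,
`Im f(X) ≥ Σ_{m=1}^{2k−2} ((−1)^{m−1}/(2m−1)!) D^{2m−1}f(A;B)` (the sum being `0` when
`k = 1`). -/
theorem stmt10 [TopologicalSpace.SeparableSpace H] (hinf : ¬ FiniteDimensional ℂ H)
    (k : ℕ) (hk : 1 ≤ k) (P : Polynomial ℝ) (hP : P.degree < ((4 * k - 3 : ℕ) : WithBot ℕ))
    (μ : Measure ℝ) [IsFiniteMeasure μ] (hμ : μ (Set.Icc (-1 : ℝ) 1)ᶜ = 0)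
    (A B X : H →L[ℂ] H) (hA : IsSelfAdjoint A) (hB : IsSelfAdjoint B)
    (hBpos : B.IsPositive)
    (hspA : spectrum ℂ A ⊆ (fun x : ℝ => (x : ℂ)) '' Set.Ioo (-1 : ℝ) 1)
    (hX : X = A + Complex.I • B) :
    (∀ s ∈ Set.Icc (-1 : ℝ) 1, IsUnit (1 - (s : ℂ) • X)) ∧
    (∃ δ > (0 : ℝ), ∀ t : ℝ, |t| < δ →
        ∀ s ∈ Set.Icc (-1 : ℝ) 1, IsUnit (1 - (s : ℂ) • (A + t • B))) ∧
    Integrable (fun s : ℝ => X ^ (4 * k - 3) * Ring.inverse (1 - (s : ℂ) • X)) μ ∧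
    (∃ δ > (0 : ℝ), ∀ t : ℝ, |t| < δ →
        Integrable
          (fun s : ℝ =>
            (A + t • B) ^ (4 * k - 3) * Ring.inverse (1 - (s : ℂ) • (A + t • B))) μ) ∧
    (opIm (fcal P μ (4 * k - 3) X)
      - ∑ m ∈ Finset.Icc 1 (2 * k - 2),
          ((-1 : ℝ) ^ (m - 1) / (Nat.factorial (2 * m - 1) : ℝ)) •
            iteratedDeriv (2 * m - 1)
              (fun t : ℝ => fcal P μ (4 * k - 3) (A + t • B)) 0).IsPositive := by
  have hnt : Nontrivial H := by
    by_contra h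
    rw [not_nontrivial_iff_subsingleton] at h
    exact hinf inferInstance
  have hn : ‖A‖ < 1 := aux_norm A hA hspA
  have hδ : 0 < (1 - ‖A‖) / (‖B‖ + 1) := div_pos (by linarith) (by positivity)
  have hu : ∀ s ∈ Set.Icc (-1 : ℝ) 1, IsUnit (1 - (s : ℂ) • X) := by
    intro s hs; rw [hX]; exact aux_unit A B hn hB s hs
  have hut := fun t ht => aux_unit' A B t ht
  refine ⟨hu, ⟨_, hδ, hut⟩, aux_integrable μ hμ X _ hu,
    ⟨_, hδ, fun t ht => aux_integrable μ hμ _ _ (hut t ht)⟩, ?_⟩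
  have huA : ∀ s ∈ Set.Icc (-1 : ℝ) 1, IsUnit (1 - (s : ℂ) • A) := by
    have := hut 0 (by simpa using hδ)
    simpa using this
  obtain ⟨j, rfl⟩ : ∃ j, k = j + 1 := ⟨k - 1, by omega⟩
  have hl : 4 * (j + 1) - 3 = 2 * (2 * j) + 1 := by omega
  rw [hl] at hP ⊢
  rw [show 2 * (j + 1) - 2 = 2 * j by omega]
  set l := 2 * (2 * j) + 1 with hl'
  obtain ⟨q, hq⟩ := aux_decomp P μ hμ l (by omega) hP A B huA
  set c : C(Set.Icc (-1:ℝ) 1, H →L[ℂ] H) :=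
    (Ring.inverse (1 - SS * ContinuousMap.const _ A) * ContinuousMap.const _ B) ^ l with hc
  have hev : ∀ᶠ t : ℝ in nhds (0:ℝ), |t| < (1 - ‖A‖) / (‖B‖ + 1) := by
    have : Filter.Tendsto (fun t : ℝ => |t|) (nhds 0) (nhds |0|) := continuous_abs.tendsto 0
    rw [abs_zero] at this
    exact this.eventually_lt_const hδ
  have hF : ∀ᶠ t : ℝ in nhds (0:ℝ), fcal P μ l (A + t • B) =
      ∑ n ∈ Finset.range l, t ^ n • q n + t ^ l •
        LL μ (c * Ring.inverse (1 - SS * ContinuousMap.const _ (A + (t:ℂ) • B))) := by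
    filter_upwards [hev] with t ht
    have := hq t (by simpa only [Complex.coe_smul] using hut t ht)
    rw [Complex.coe_smul] at this
    rw [this, Complex.coe_smul]
    congr 1
    · refine Finset.sum_congr rfl fun n _ => ?_
      rw [← Complex.ofReal_pow, Complex.coe_smul]
    · rw [← Complex.ofReal_pow, Complex.coe_smul]
  have hFs : ∀ᶠ t : ℝ in nhds (0:ℝ), fcal P μ l (A + t • B) =
      ∑ n ∈ Finset.range l, t ^ n • star (q n) + t ^ l •
        star (LL μ (c * Ring.inverse (1 - SS * ContinuousMap.const _ (A + (t:ℂ) • B)))) := by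
    filter_upwards [hF] with t ht
    have hs : IsSelfAdjoint (A + t • B) := hA.add ((IsSelfAdjoint.all t).smul hB)
    rw [← fcal_star P μ l _ hs, ht, star_add, star_sum]
    simp only [star_smul, star_trivial]
  have hD : ∀ n < l, iteratedDeriv n (fun t : ℝ => fcal P μ l (A + t • B)) 0
      = (n.factorial : ℝ) • q n := fun n hn =>
    aux_deriv _ _ l n hn q (aux_smooth μ c A B huA n) hF
  have hD' : ∀ n < l, iteratedDeriv n (fun t : ℝ => fcal P μ l (A + t • B)) 0
      = (n.factorial : ℝ) • star (q n) := fun n hn =>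
    aux_deriv _ _ l n hn (fun n => star (q n))
      ((starL' ℝ : (H →L[ℂ] H) ≃L[ℝ] (H →L[ℂ] H)).contDiff.contDiffAt.comp (0:ℝ)
        (aux_smooth μ c A B huA n)) hFs
  have hqs : ∀ n < l, star (q n) = q n := by
    intro n hn
    have h := (hD' n hn).symm.trans (hD n hn)
    exact smul_right_injective _ (by positivity : (n.factorial : ℝ) ≠ 0) h
  have hXu := hu
  rw [hX] at hXu
  have hIl : Complex.I ^ l = Complex.I := by
    rw [hl', pow_succ, pow_mul, Complex.I_sq, pow_mul]; simp
  rw [hX, hq Complex.I hXu, opIm_add, opIm_sum q (2 * j) hqs, hIl]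
  have hsum : ∑ m ∈ Finset.Icc 1 (2 * j), ((-1 : ℝ) ^ (m - 1) / (Nat.factorial (2 * m - 1) : ℝ)) •
      iteratedDeriv (2 * m - 1) (fun t : ℝ => fcal P μ l (A + t • B)) 0 =
      ∑ m ∈ Finset.Icc 1 (2 * j), ((-1:ℝ) ^ (m - 1)) • q (2 * m - 1) := by
    refine Finset.sum_congr rfl fun m hm => ?_
    rw [Finset.mem_Icc] at hm
    rw [hD _ (by omega), smul_smul, div_mul_cancel₀ _ (by positivity)]
  rw [hsum, add_sub_cancel_left]
  refine opIm_pos _ fun x => LL_pos μ _ (fun s y => ?_) x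
  rw [hc, ContinuousMap.mul_apply, ContinuousMap.pow_apply, ContinuousMap.mul_apply, SS_inv A huA,
    SS_inv _ hXu, ContinuousMap.const_apply, hl']
  exact aux_pos A B _ _ hA hBpos s (2 * j)
    (Ring.inverse_mul_cancel _ (huA s s.2)) (Ring.mul_inverse_cancel _ (huA s s.2))
    (Ring.inverse_mul_cancel _ (hXu s s.2)) (Ring.mul_inverse_cancel _ (hXu s s.2)) y
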